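/- There exists an absolute constant c₂ > 0 such that for every odd prime q and every divisor m of (q−1)/2, −S(m,q) ≤ c₂·(log q)³/(q^{1/m}·log log q). -/

import Mathlib

/-!
Put `r = q ^ (1 / m)`, `L = log q` and `y = p ^ (g_p - 1)`. The negative part of the local term
at a prime `p` is `≪ log y / y`, with `y = p ^ (q - 1)` instead when `g_p = 1`.

* Every local term is `≪ log p / p²`, so the primes `p ≥ r` contribute `≪ (1 + log r) / r`.
* If `p < r`, then `1 < p ^ m < q` forces `g_p ≥ 2`, and `q` divides
  `1 + p ^ m + ⋯ + p ^ (m (g_p - 1)) < 2 y ^ m`. Hence `y ≥ r / 2`, and `p` contributes `≪ L / r`.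
  * The primes with `y ≥ r²` contribute `≪ L / r²` each, and there are at most `r` of them.
  * If `X < p` and `y < r²`, then `g_p - 1 < 2 log r / log X`. The powers `p, p², …, p ^ m` of the
    primes `p < r` with `g_p = g` are distinct roots of `x ^ (m g) = 1` modulo `q`, so there are at
    most `g` such primes. Summing over `g`, there are `≪ (log r / log X)²` primes in this range.
  * At most `X` primes remain, and `X = L² / log L` balances the last two counts.
-/

open Filter Topology

/-- The multiplicative order `g_p` of `p^m` modulo `q`. -/
noncomputable def gp (q m p : ℕ) : ℕ := orderOf ((p : ZMod q) ^ m)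

/-- The local term at a prime `p` of the prime sum `S(m,q)` of the paper. -/
noncomputable def Sterm (q m p : ℕ) : ℝ :=
  if p = q then 0 else
    (if gp q m p = 1 then
        (q : ℝ) * Real.log p / ((p : ℝ) ^ q - 1)
          - ((q : ℝ) - 1) * Real.log p / ((p : ℝ) ^ (q - 1) - 1)
      else 0)
    + (if 3 ≤ gp q m p then
        (gp q m p : ℝ) * Real.log p / ((p : ℝ) ^ gp q m p - 1)
          - ((gp q m p : ℝ) - 1) * Real.log p / ((p : ℝ) ^ (gp q m p - 1) - 1)
      else 0)
    + (if gp q m p = 2 then Real.log p / ((p : ℝ) ^ 2 - 1) else 0)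
    + (if 4 ≤ gp q m p ∧ 2 ∣ gp q m p then
        Real.log p / ((p : ℝ) ^ (gp q m p / 2) - ((p : ℝ) ^ (gp q m p / 2))⁻¹)
      else 0)

/-- The prime sum `S(m,q)` of the paper (a sum over all primes `p ≠ q`). -/
noncomputable def Smq (q m : ℕ) : ℝ := ∑' p : Nat.Primes, Sterm q m (p : ℕ)

section

open Finset Real

section LogTail

/-- The function `(1 + log x) / x = ∫ t in Ioi x, log t / t ^ 2`. It is antitone on `[1, ∞)`
and dominates `log x / (x - 1)` there, without the pole of the latter at `x = 1`. -/
noncomputable def logTail (x : ℝ) : ℝ := (1 + log x) / x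

lemma antitoneOn_logTail : AntitoneOn logTail (Set.Ici 1) := by
  have logTail_eq (x : ℝ) (hx : 1 ≤ x) :
      logTail x = exp 1 * (log (exp 1 * x) / (exp 1 * x)) := by
    rw [logTail, log_mul (exp_ne_zero 1) (by positivity), log_exp]
    field_simp
  intro x hx y hy hxy
  rw [Set.mem_Ici] at hx hy
  rw [logTail_eq x hx, logTail_eq y hy]
  refine mul_le_mul_of_nonneg_left ?_ (exp_pos 1).le
  exact log_div_self_antitoneOn (le_mul_of_one_le_right (exp_pos 1).le hx)
    (le_mul_of_one_le_right (exp_pos 1).le hy) (by gcongr)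

lemma logTail_nonneg {x : ℝ} (hx : 1 ≤ x) : 0 ≤ logTail x :=
  div_nonneg (by linarith [log_nonneg hx]) (by linarith)

lemma log_div_sub_one_le_logTail {x : ℝ} (hx : 1 < x) : log x / (x - 1) ≤ logTail x := by
  rw [logTail, div_le_div_iff₀ (by linarith) (by linarith)]
  linarith [log_le_sub_one_of_pos (zero_lt_one.trans hx)]

lemma logTail_le_two_mul_logTail_two_mul {x : ℝ} (hx : 0 < x) :
    logTail x ≤ 2 * logTail (2 * x) := by
  rw [logTail, logTail, ← mul_div_assoc, mul_div_mul_left _ _ two_ne_zero]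
  gcongr
  linarith

lemma mul_logTail_sq_le {x : ℝ} (hx : 0 < x) : x * logTail (x ^ 2) ≤ 2 * logTail x := by
  calc x * logTail (x ^ 2) = (1 + 2 * log x) / x := by
        rw [logTail, log_pow]
        push_cast
        field_simp
    _ ≤ 2 * (1 + log x) / x := by gcongr; linarith
    _ = 2 * logTail x := mul_div_assoc ..

lemma logTail_sq_le {x : ℝ} (hx : 2 ≤ x) : logTail (x ^ 2) ≤ 6 * (log x / (x * (x + 1))) := by
  have one_le_two_mul_log : 1 ≤ 2 * log x := by
    linarith [log_two_gt_d9, log_le_log two_pos hx]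
  calc logTail (x ^ 2) = (1 + 2 * log x) / x ^ 2 := by
        rw [logTail, log_pow, Nat.cast_ofNat]
    _ ≤ (4 * log x) / x ^ 2 := by gcongr; linarith
    _ ≤ 6 * log x / (x * (x + 1)) := by
        rw [div_le_div_iff₀ (by positivity) (by positivity)]
        have : 0 ≤ log x * (x * (x - 2)) :=
          mul_nonneg (by linarith) (mul_nonneg (by linarith) (by linarith))
        linarith
    _ = 6 * (log x / (x * (x + 1))) := mul_div_assoc ..

lemma log_div_mul_add_one_le {x : ℝ} (hx : 0 < x) :
    log x / (x * (x + 1)) ≤ logTail x - logTail (x + 1) := by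
  have mul_log_sub_le : x * (log (x + 1) - log x) ≤ 1 := by
    have := log_le_sub_one_of_pos (show 0 < (x + 1) / x by positivity)
    rw [log_div (by positivity) hx.ne', add_div, div_self hx.ne', add_sub_cancel_left] at this
    rwa [← le_div_iff₀' hx]
  rw [logTail, logTail, div_sub_div _ _ hx.ne' (by positivity)]
  gcongr
  linarith

lemma log_div_mul_add_one_nonneg (n : ℕ) : 0 ≤ log n / ((n : ℝ) * (n + 1)) :=
  div_nonneg (log_natCast_nonneg n) (by positivity)

lemma sum_log_div_mul_add_one_le {x : ℝ} (hx : 1 ≤ x) (T : Finset ℕ) (hT : ∀ n ∈ T, x ≤ n) :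
    ∑ n ∈ T, log n / ((n : ℝ) * (n + 1)) ≤ logTail x := by
  set N := ⌈x⌉₊
  set M := max N (T.sup id + 1)
  have hxN : x ≤ N := Nat.le_ceil x
  have hNM : N ≤ M := le_max_left ..
  have hTNM : T ⊆ Ico N M := fun n hn ↦
    mem_Ico.2 ⟨Nat.ceil_le.2 (hT n hn),
      (Nat.lt_succ_of_le (le_sup (f := id) hn)).trans_le (le_max_right ..)⟩
  calc ∑ n ∈ T, log n / ((n : ℝ) * (n + 1))
      ≤ ∑ n ∈ Ico N M, log n / ((n : ℝ) * (n + 1)) :=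
        sum_le_sum_of_subset_of_nonneg hTNM fun n _ _ ↦ log_div_mul_add_one_nonneg n
    _ ≤ ∑ n ∈ Ico N M, -(logTail ((n + 1 : ℕ) : ℝ) - logTail n) := by
        refine sum_le_sum fun n hn ↦ ?_
        have hn : 0 < (n : ℝ) := by
          linarith [(Nat.cast_le (α := ℝ)).2 (mem_Ico.1 hn).1]
        rw [neg_sub, Nat.cast_add_one]
        exact log_div_mul_add_one_le hn
    _ = logTail N - logTail M := by
        rw [sum_neg_distrib, sum_Ico_sub (fun n : ℕ ↦ logTail n) hNM, neg_sub]
    _ ≤ logTail N := sub_le_self _ (logTail_nonneg (by linarith [(Nat.cast_le (α := ℝ)).2 hNM]))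
    _ ≤ logTail x := antitoneOn_logTail hx (hx.trans hxN) hxN

lemma sum_primes_log_div_mul_add_one_le {x : ℝ} (hx : 1 ≤ x) (T : Finset Nat.Primes)
    (hT : ∀ p ∈ T, x ≤ (p : ℕ)) :
    ∑ p ∈ T, log (p : ℕ) / (((p : ℕ) : ℝ) * ((p : ℕ) + 1)) ≤ logTail x := by
  have h := sum_log_div_mul_add_one_le hx
    (T.map ⟨((↑) : Nat.Primes → ℕ), Nat.Primes.coe_nat_injective⟩) (forall_mem_map.2 hT)
  exact (sum_map ..).symm.trans_le h

end LogTail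

section LocalTerm

variable {q m p e : ℕ}

/-- The expression `e log p / (p ^ e - 1)` out of which the local terms of `S(m,q)` are built. -/
noncomputable def localWeight (p e : ℕ) : ℝ := e * log p / ((p : ℝ) ^ e - 1)

lemma localWeight_nonneg (hp : 1 ≤ p) : 0 ≤ localWeight p e :=
  div_nonneg (mul_nonneg e.cast_nonneg (log_natCast_nonneg p))
    (sub_nonneg.2 (one_le_pow₀ (by exact_mod_cast hp)))

lemma localWeight_le_logTail (hp : 2 ≤ p) (he : e ≠ 0) :
    localWeight p e ≤ logTail ((p : ℝ) ^ e) := by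
  rw [localWeight, ← log_pow]
  exact log_div_sub_one_le_logTail (one_lt_pow₀ (by exact_mod_cast hp) he)

lemma localWeight_le_log_div (hp : 2 ≤ p) (he : 2 ≤ e) :
    localWeight p e ≤ 6 * (log p / ((p : ℝ) * (p + 1))) := by
  have hp₁ : (1 : ℝ) ≤ p := by exact_mod_cast one_le_two.trans hp
  calc localWeight p e ≤ logTail ((p : ℝ) ^ e) := localWeight_le_logTail hp (by omega)
    _ ≤ logTail ((p : ℝ) ^ 2) :=
        antitoneOn_logTail (one_le_pow₀ hp₁) (one_le_pow₀ hp₁) (pow_le_pow_right₀ hp₁ he)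
    _ ≤ 6 * (log p / ((p : ℝ) * (p + 1))) := logTail_sq_le (by exact_mod_cast hp)

lemma log_div_sq_sub_one_nonneg (hp : 1 ≤ p) : 0 ≤ log p / ((p : ℝ) ^ 2 - 1) :=
  div_nonneg (log_natCast_nonneg p) (sub_nonneg.2 (one_le_pow₀ (by exact_mod_cast hp)))

lemma log_div_sq_sub_one_le_localWeight (hp : 2 ≤ p) :
    log p / ((p : ℝ) ^ 2 - 1) ≤ localWeight p 2 := by
  have hp₁ : (1 : ℝ) ≤ (p : ℝ) ^ 2 := one_le_pow₀ (by exact_mod_cast one_le_two.trans hp)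
  rw [localWeight, Nat.cast_ofNat]
  gcongr
  linarith [log_natCast_nonneg p]

lemma log_div_pow_sub_inv_nonneg (hp : 1 ≤ p) :
    0 ≤ log p / ((p : ℝ) ^ e - ((p : ℝ) ^ e)⁻¹) := by
  have hpe : (1 : ℝ) ≤ (p : ℝ) ^ e := one_le_pow₀ (by exact_mod_cast hp)
  exact div_nonneg (log_natCast_nonneg p) (by linarith [inv_le_one_of_one_le₀ hpe])

lemma log_div_pow_sub_inv_le (hp : 2 ≤ p) (he : 2 ≤ e) :
    log p / ((p : ℝ) ^ e - ((p : ℝ) ^ e)⁻¹) ≤ log p / ((p : ℝ) ^ 2 - 1) := by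
  have hp₁ : (1 : ℝ) < p := by exact_mod_cast hp
  have hpe : (p : ℝ) ^ 2 ≤ (p : ℝ) ^ e := pow_le_pow_right₀ hp₁.le he
  have hinv : ((p : ℝ) ^ e)⁻¹ ≤ 1 := inv_le_one_of_one_le₀ (one_le_pow₀ hp₁.le)
  gcongr
  exact sub_pos.2 (one_lt_pow₀ hp₁ two_ne_zero)

lemma Sterm_eq_localWeight (hq : q ≠ 0) (hpq : p ≠ q) :
    Sterm q m p =
      (if gp q m p = 1 then localWeight p q - localWeight p (q - 1) else 0)
      + (if 3 ≤ gp q m p then localWeight p (gp q m p) - localWeight p (gp q m p - 1) else 0)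
      + (if gp q m p = 2 then log p / ((p : ℝ) ^ 2 - 1) else 0)
      + (if 4 ≤ gp q m p ∧ 2 ∣ gp q m p then
          log p / ((p : ℝ) ^ (gp q m p / 2) - ((p : ℝ) ^ (gp q m p / 2))⁻¹) else 0) := by
  have cast_pred (n : ℕ) (hn : n ≠ 0) : ((n - 1 : ℕ) : ℝ) = n - 1 :=
    Nat.cast_pred (Nat.pos_of_ne_zero hn)
  simp only [Sterm, if_neg hpq, localWeight, cast_pred q hq]
  split_ifs with _ hg <;> first | rfl | rw [cast_pred _ (by omega)]

lemma abs_Sterm_le (hq : 3 ≤ q) (hp : 2 ≤ p) :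
    |Sterm q m p| ≤ 24 * (log p / ((p : ℝ) * (p + 1))) := by
  set B := 6 * (log p / ((p : ℝ) * (p + 1))) with hB
  have hB₀ : 0 ≤ B := mul_nonneg (by norm_num) (log_div_mul_add_one_nonneg p)
  rcases eq_or_ne p q with rfl | hpq
  · rw [Sterm, if_pos rfl, abs_zero]
    linarith
  have abs_ite_le {P : Prop} [Decidable P] {x : ℝ} (hx : P → |x| ≤ B) :
      |if P then x else 0| ≤ B := by
    split_ifs with h
    exacts [hx h, abs_zero.trans_le hB₀]
  have abs_localWeight_sub_le {a b : ℕ} (ha : 2 ≤ a) (hb : 2 ≤ b) :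
      |localWeight p a - localWeight p b| ≤ B :=
    abs_sub_le_of_nonneg_of_le (localWeight_nonneg (by omega)) (localWeight_le_log_div hp ha)
      (localWeight_nonneg (by omega)) (localWeight_le_log_div hp hb)
  have log_div_le : log p / ((p : ℝ) ^ 2 - 1) ≤ B :=
    (log_div_sq_sub_one_le_localWeight hp).trans (localWeight_le_log_div hp le_rfl)
  rw [Sterm_eq_localWeight (by omega) hpq]
  calc _ ≤ B + B + B + B := by
        refine (abs_add_le _ _).trans (add_le_add ((abs_add_three _ _ _).trans
          (add_le_add_three (abs_ite_le fun _ ↦ ?_) (abs_ite_le fun _ ↦ ?_)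
            (abs_ite_le fun _ ↦ ?_))) (abs_ite_le fun hg ↦ ?_))
        · exact abs_localWeight_sub_le (by omega) (by omega)
        · exact abs_localWeight_sub_le (by omega) (by omega)
        · rwa [abs_of_nonneg (log_div_sq_sub_one_nonneg (by omega))]
        · rw [abs_of_nonneg (log_div_pow_sub_inv_nonneg (by omega))]
          exact (log_div_pow_sub_inv_le hp (by omega)).trans log_div_le
    _ = 24 * (log p / ((p : ℝ) * (p + 1))) := by rw [hB]; ring

lemma neg_Sterm_le_localWeight (hq : q ≠ 0) (hp : 1 ≤ p) (hg : 2 ≤ gp q m p) :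
    -Sterm q m p ≤ localWeight p (gp q m p - 1) := by
  have hweight : 0 ≤ localWeight p (gp q m p - 1) := localWeight_nonneg hp
  rcases eq_or_ne p q with rfl | hpq
  · rwa [Sterm, if_pos rfl, neg_zero]
  have hgp : 0 ≤ localWeight p (gp q m p) := localWeight_nonneg hp
  have hsq : 0 ≤ log p / ((p : ℝ) ^ 2 - 1) := log_div_sq_sub_one_nonneg hp
  have hinv : 0 ≤ log p / ((p : ℝ) ^ (gp q m p / 2) - ((p : ℝ) ^ (gp q m p / 2))⁻¹) :=
    log_div_pow_sub_inv_nonneg hp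
  rw [Sterm_eq_localWeight hq hpq, if_neg (by omega)]
  split_ifs <;> linarith

lemma summable_Sterm (hq : 3 ≤ q) : Summable fun p : Nat.Primes ↦ Sterm q m p := by
  refine .of_norm_bounded (.mul_left 24 (summable_of_sum_le
    (fun p : Nat.Primes ↦ log_div_mul_add_one_nonneg p) fun T ↦
      sum_primes_log_div_mul_add_one_le le_rfl T fun p _ ↦ ?_)) fun p ↦ abs_Sterm_le hq p.2.two_le
  exact_mod_cast p.2.one_le

end LocalTerm

section Order

variable {q m : ℕ}

lemma lt_two_mul_pow_orderOf_sub_one {x : ℕ} (hq : q.Prime) (hx : 2 ≤ x)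
    (hord : 2 ≤ orderOf (x : ZMod q)) : q < 2 * x ^ (orderOf (x : ZMod q) - 1) := by
  have : Fact q.Prime := ⟨hq⟩
  obtain ⟨e, he⟩ : ∃ e, orderOf (x : ZMod q) = e + 1 := Nat.exists_eq_add_of_le' (by omega)
  have hdvd : q ∣ ∑ i ∈ range (e + 1), x ^ i := by
    rw [← ZMod.natCast_eq_zero_iff, ← he]
    push_cast
    exact (IsPrimitiveRoot.orderOf _).geom_sum_eq_zero hord
  have hle := Nat.le_of_dvd (sum_pos (fun i _ ↦ by positivity) nonempty_range_add_one) hdvd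
  have hlt : ∑ i ∈ range e, x ^ i < x ^ e := Nat.geomSum_lt hx fun _ ↦ mem_range.1
  rw [sum_range_succ] at hle
  rw [he, Nat.add_sub_cancel]
  omega

lemma two_le_gp (hq : q.Prime) (hm : m ≠ 0) {p : ℕ} (hp : 2 ≤ p) (hpq : p ^ m < q) :
    2 ≤ gp q m p := by
  have : Fact q.Prime := ⟨hq⟩
  have hpm : 1 < p ^ m := Nat.one_lt_pow hm hp
  have hne_zero : ((p ^ m : ℕ) : ZMod q) ≠ 0 := fun h ↦
    hpq.not_ge (Nat.le_of_dvd (by omega) ((ZMod.natCast_eq_zero_iff _ _).1 h))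
  have hne_one : ((p ^ m : ℕ) : ZMod q) ≠ ((1 : ℕ) : ZMod q) := fun h ↦
    hpm.ne' (CharP.natCast_injOn_Iio (ZMod q) q hpq hq.one_lt h)
  have hgp₀ : gp q m p ≠ 0 := by
    rw [gp, orderOf_ne_zero_iff, isOfFinOrder_iff_pow_eq_one, ← Nat.cast_pow]
    exact ⟨q - 1, Nat.sub_pos_of_lt hq.one_lt, ZMod.pow_card_sub_one_eq_one hne_zero⟩
  have hgp₁ : gp q m p ≠ 1 := by
    rw [gp, Ne, orderOf_eq_one_iff]
    exact_mod_cast hne_one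
  omega

lemma card_primes_gp_eq_le (hq : q.Prime) (hm : m ≠ 0) {g : ℕ} (hg : g ≠ 0)
    (T : Finset Nat.Primes) (hT : ∀ p ∈ T, (p : ℕ) ^ m < q ∧ gp q m p = g) : #T ≤ g := by
  have : Fact q.Prime := ⟨hq⟩
  have hmg : 0 < m * g := by positivity
  have pow_lt {p : Nat.Primes} {j : ℕ} (hp : p ∈ T) (hj : j ∈ range m) :
      (p : ℕ) ^ (j + 1) < q :=
    (Nat.pow_le_pow_right p.2.pos (mem_range.1 hj)).trans_lt (hT p hp).1
  have mapsTo_roots : Set.MapsTo (fun x : Nat.Primes × ℕ ↦ ((x.1 : ℕ) : ZMod q) ^ (x.2 + 1))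
      (T ×ˢ range m : Finset _) (Polynomial.nthRoots (m * g) (1 : ZMod q)).toFinset := by
    rintro ⟨p, j⟩ hx
    have hp : p ∈ T := (mem_product.1 hx).1
    have pow_eq_one : (((p : ℕ) : ZMod q) ^ m) ^ g = 1 := by
      rw [← (hT p hp).2]
      exact pow_orderOf_eq_one _
    rw [mem_coe, Multiset.mem_toFinset, Polynomial.mem_nthRoots hmg, pow_right_comm, pow_mul,
      pow_eq_one, one_pow]
  have injOn : Set.InjOn (fun x : Nat.Primes × ℕ ↦ ((x.1 : ℕ) : ZMod q) ^ (x.2 + 1))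
      (T ×ˢ range m : Finset _) := by
    rintro ⟨p, j⟩ hx ⟨p', j'⟩ hx' h
    obtain ⟨hp, hj⟩ := mem_product.1 hx
    obtain ⟨hp', hj'⟩ := mem_product.1 hx'
    refine Nat.Primes.prodNatEquiv.injective (Subtype.ext ?_)
    exact CharP.natCast_injOn_Iio (ZMod q) q (pow_lt hp hj) (pow_lt hp' hj') (by simpa using h)
  refine Nat.le_of_mul_le_mul_left ?_ (Nat.pos_of_ne_zero hm)
  calc m * #T = #(T ×ˢ range m) := by rw [card_product, card_range, mul_comm]
    _ ≤ #(Polynomial.nthRoots (m * g) (1 : ZMod q)).toFinset :=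
        card_le_card_of_injOn _ mapsTo_roots injOn
    _ ≤ m * g := (Multiset.toFinset_card_le _).trans (Polynomial.card_nthRoots _ _)

lemma card_primes_gp_sub_one_le (hq : q.Prime) (hm : m ≠ 0) {n : ℕ} (T : Finset Nat.Primes)
    (hT : ∀ p ∈ T, (p : ℕ) ^ m < q ∧ gp q m p - 1 ≤ n) : #T ≤ 2 * n ^ 2 := by
  have gp_mem (p) (hp : p ∈ T) : gp q m p ∈ Icc 2 (n + 1) := by
    have := two_le_gp hq hm p.2.two_le (hT p hp).1
    have := (hT p hp).2
    exact mem_Icc.2 ⟨by omega, by omega⟩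
  have card_fiber_le (g) (hg : g ∈ Icc 2 (n + 1)) :
      #(T.filter fun p : Nat.Primes ↦ gp q m p = g) ≤ n + 1 := by
    rw [mem_Icc] at hg
    refine (card_primes_gp_eq_le hq hm (by omega) _ fun p hp ↦ ?_).trans hg.2
    rw [mem_filter] at hp
    exact ⟨(hT p hp.1).1, hp.2⟩
  calc #T ≤ (n + 1) * #(Icc 2 (n + 1)) :=
        card_le_mul_card_image_of_maps_to gp_mem _ card_fiber_le
    _ = n ^ 2 + n := by rw [Nat.card_Icc, show n + 1 + 1 - 2 = n by omega]; ring
    _ ≤ 2 * n ^ 2 := by linarith [Nat.le_self_pow two_ne_zero n]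

end Order

lemma card_primes_le_of_le {x : ℝ} (hx : 0 ≤ x) (T : Finset Nat.Primes)
    (hT : ∀ p ∈ T, ((p : ℕ) : ℝ) ≤ x) : (#T : ℝ) ≤ x := by
  have maps_to : Set.MapsTo ((↑) : Nat.Primes → ℕ) (T : Set Nat.Primes) (Icc 1 ⌊x⌋₊) := fun p hp ↦
    mem_coe.2 (mem_Icc.2 ⟨p.2.one_le, Nat.le_floor (hT p hp)⟩)
  have card_le := card_le_card_of_injOn _ maps_to Nat.Primes.coe_nat_injective.injOn
  rw [Nat.card_Icc, Nat.add_sub_cancel] at card_le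
  exact (Nat.cast_le.2 card_le).trans (Nat.floor_le hx)

section Sums

variable {q m : ℕ} {r : ℝ}

lemma pow_lt_of_lt_root (hm : m ≠ 0) (hrm : r ^ m = q) {p : ℕ} (hpr : (p : ℝ) < r) :
    p ^ m < q := by
  have := pow_lt_pow_left₀ hpr p.cast_nonneg hm
  rw [hrm] at this
  exact_mod_cast this

lemma root_le_two_mul_pow (hq : q.Prime) (hm : m ≠ 0) (hrm : r ^ m = q) {p : ℕ} (hp : 2 ≤ p)
    (hpr : (p : ℝ) < r) : r ≤ 2 * (p : ℝ) ^ (gp q m p - 1) := by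
  have hg : 2 ≤ orderOf ((p ^ m : ℕ) : ZMod q) := by
    simpa only [gp, Nat.cast_pow] using two_le_gp hq hm hp (pow_lt_of_lt_root hm hrm hpr)
  have hlt := lt_two_mul_pow_orderOf_sub_one hq (Nat.one_lt_pow hm hp) hg
  rw [Nat.cast_pow, ← gp, pow_right_comm] at hlt
  refine le_of_pow_le_pow_left₀ hm (by positivity) ?_
  calc r ^ m = q := hrm
    _ ≤ 2 * ((p : ℝ) ^ (gp q m p - 1)) ^ m := by exact_mod_cast hlt.le
    _ ≤ 2 ^ m * ((p : ℝ) ^ (gp q m p - 1)) ^ m := by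
        gcongr
        exact le_self_pow₀ one_le_two hm
    _ = (2 * (p : ℝ) ^ (gp q m p - 1)) ^ m := (mul_pow ..).symm

lemma neg_Sterm_le_logTail_pow (hq : q.Prime) (hm : m ≠ 0) {p : ℕ} (hp : 2 ≤ p)
    (hpq : p ^ m < q) : -Sterm q m p ≤ logTail ((p : ℝ) ^ (gp q m p - 1)) := by
  have hg := two_le_gp hq hm hp hpq
  exact (neg_Sterm_le_localWeight hq.ne_zero (by omega) hg).trans
    (localWeight_le_logTail hp (by omega))

lemma neg_Sterm_le_two_mul_logTail (hq : q.Prime) (hm : m ≠ 0) (hr : 1 ≤ r) (hrm : r ^ m = q)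
    {p : ℕ} (hp : 2 ≤ p) (hpr : (p : ℝ) < r) : -Sterm q m p ≤ 2 * logTail r := by
  have hle := root_le_two_mul_pow hq hm hrm hp hpr
  calc -Sterm q m p ≤ logTail ((p : ℝ) ^ (gp q m p - 1)) :=
        neg_Sterm_le_logTail_pow hq hm hp (pow_lt_of_lt_root hm hrm hpr)
    _ ≤ 2 * logTail (2 * (p : ℝ) ^ (gp q m p - 1)) :=
        logTail_le_two_mul_logTail_two_mul (by positivity)
    _ ≤ 2 * logTail r := by gcongr; exact antitoneOn_logTail hr (hr.trans hle) hle

lemma neg_Sterm_le_logTail_sq (hq : q.Prime) (hm : m ≠ 0) (hr : 1 ≤ r) (hrm : r ^ m = q)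
    {p : ℕ} (hp : 2 ≤ p) (hpr : (p : ℝ) < r) (hfar : r ^ 2 ≤ (p : ℝ) ^ (gp q m p - 1)) :
    -Sterm q m p ≤ logTail (r ^ 2) :=
  (neg_Sterm_le_logTail_pow hq hm hp (pow_lt_of_lt_root hm hrm hpr)).trans
    (antitoneOn_logTail (one_le_pow₀ hr) ((one_le_pow₀ hr).trans hfar) hfar)

lemma sum_neg_Sterm_le_card_mul (hq : q.Prime) (hm : m ≠ 0) (hr : 1 ≤ r) (hrm : r ^ m = q)
    (T : Finset Nat.Primes) (hT : ∀ p ∈ T, ((p : ℕ) : ℝ) < r) {N : ℝ} (hN : #T ≤ N) :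
    ∑ p ∈ T, -Sterm q m p ≤ N * (2 * logTail r) := by
  have hsum : ∑ p ∈ T, -Sterm q m p ≤ #T • (2 * logTail r) :=
    sum_le_card_nsmul _ _ _ fun p hp ↦
      neg_Sterm_le_two_mul_logTail hq hm hr hrm p.2.two_le (hT p hp)
  have := logTail_nonneg hr
  calc _ ≤ #T * (2 * logTail r) := by rwa [← nsmul_eq_mul]
    _ ≤ N * (2 * logTail r) := by gcongr

lemma sum_neg_Sterm_le_of_root_le (hq : 3 ≤ q) (hr : 1 ≤ r) (T : Finset Nat.Primes)
    (hT : ∀ p ∈ T, r ≤ (p : ℕ)) : ∑ p ∈ T, -Sterm q m p ≤ 24 * logTail r :=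
  calc ∑ p ∈ T, -Sterm q m p
      ≤ ∑ p ∈ T, 24 * (log (p : ℕ) / (((p : ℕ) : ℝ) * ((p : ℕ) + 1))) :=
        sum_le_sum fun p _ ↦ (neg_le_abs _).trans (abs_Sterm_le hq p.2.two_le)
    _ ≤ 24 * logTail r := by
        rw [← mul_sum]
        gcongr
        exact sum_primes_log_div_mul_add_one_le hr T hT

lemma sum_neg_Sterm_le_of_sq_le_pow (hq : q.Prime) (hm : m ≠ 0) (hr : 1 ≤ r) (hrm : r ^ m = q)
    (T : Finset Nat.Primes) (hT : ∀ p ∈ T, ((p : ℕ) : ℝ) < r)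
    (hfar : ∀ p ∈ T, r ^ 2 ≤ ((p : ℕ) : ℝ) ^ (gp q m p - 1)) :
    ∑ p ∈ T, -Sterm q m p ≤ 2 * logTail r := by
  have hsum : ∑ p ∈ T, -Sterm q m p ≤ #T • logTail (r ^ 2) :=
    sum_le_card_nsmul _ _ _ fun p hp ↦
      neg_Sterm_le_logTail_sq hq hm hr hrm p.2.two_le (hT p hp) (hfar p hp)
  have := logTail_nonneg (one_le_pow₀ hr : 1 ≤ r ^ 2)
  calc _ ≤ #T * logTail (r ^ 2) := by rwa [← nsmul_eq_mul]
    _ ≤ r * logTail (r ^ 2) := by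
        gcongr
        exact card_primes_le_of_le (by linarith) T fun p hp ↦ (hT p hp).le
    _ ≤ 2 * logTail r := mul_logTail_sq_le (by linarith)

lemma card_primes_pow_lt_sq_le (hq : q.Prime) (hm : m ≠ 0) (hr : 1 ≤ r) (hrm : r ^ m = q)
    {X : ℝ} (hX : 1 < X) (T : Finset Nat.Primes) (hT : ∀ p ∈ T, ((p : ℕ) : ℝ) < r)
    (hnear : ∀ p ∈ T, ((p : ℕ) : ℝ) ^ (gp q m p - 1) < r ^ 2) (hXT : ∀ p ∈ T, X < (p : ℕ)) :
    (#T : ℝ) ≤ 8 * (log r / log X) ^ 2 := by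
  have hlogX : 0 < log X := log_pos hX
  set E := 2 * log r / log X with hE
  have hE₀ : 0 ≤ E := div_nonneg (mul_nonneg zero_le_two (log_nonneg hr)) hlogX.le
  have gp_sub_one_le (p) (hp : p ∈ T) : gp q m p - 1 ≤ ⌊E⌋₊ := by
    refine Nat.le_floor ((le_div_iff₀ hlogX).2 ?_)
    have hp₀ : 0 < ((p : ℕ) : ℝ) := by exact_mod_cast p.2.pos
    calc ((gp q m p - 1 : ℕ) : ℝ) * log X
        ≤ (gp q m p - 1 : ℕ) * log (p : ℕ) := by
          gcongr
          exact (hXT p hp).le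
      _ = log (((p : ℕ) : ℝ) ^ (gp q m p - 1)) := (log_pow ..).symm
      _ ≤ log (r ^ 2) := log_le_log (by positivity) (hnear p hp).le
      _ = 2 * log r := by rw [log_pow, Nat.cast_ofNat]
  have card_le := card_primes_gp_sub_one_le hq hm T fun p hp ↦
    ⟨pow_lt_of_lt_root hm hrm (hT p hp), gp_sub_one_le p hp⟩
  calc (#T : ℝ) ≤ 2 * (⌊E⌋₊ : ℝ) ^ 2 := by exact_mod_cast card_le
    _ ≤ 2 * E ^ 2 := by gcongr; exact Nat.floor_le hE₀
    _ = 8 * (log r / log X) ^ 2 := by rw [hE]; ring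

lemma sum_neg_Sterm_le_of_lt_root (hq : q.Prime) (hm : m ≠ 0) (hr : 1 ≤ r) (hrm : r ^ m = q)
    {X : ℝ} (hX : 1 < X) (T : Finset Nat.Primes) (hT : ∀ p ∈ T, ((p : ℕ) : ℝ) < r) :
    ∑ p ∈ T, -Sterm q m p ≤ (2 + 2 * X + 16 * (log r / log X) ^ 2) * logTail r := by
  set far := T.filter fun p : Nat.Primes ↦ r ^ 2 ≤ ((p : ℕ) : ℝ) ^ (gp q m p - 1)
  set near := T.filter fun p : Nat.Primes ↦ ¬ r ^ 2 ≤ ((p : ℕ) : ℝ) ^ (gp q m p - 1)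
  set small := near.filter fun p : Nat.Primes ↦ ((p : ℕ) : ℝ) ≤ X
  set large := near.filter fun p : Nat.Primes ↦ ¬ ((p : ℕ) : ℝ) ≤ X
  have hnear : near ⊆ T := filter_subset _ _
  have hlarge : large ⊆ near := filter_subset _ _
  have sum_far : ∑ p ∈ far, -Sterm q m p ≤ 2 * logTail r :=
    sum_neg_Sterm_le_of_sq_le_pow hq hm hr hrm far (fun p hp ↦ hT p (mem_filter.1 hp).1)
      fun p hp ↦ (mem_filter.1 hp).2
  have sum_small : ∑ p ∈ small, -Sterm q m p ≤ X * (2 * logTail r) :=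
    sum_neg_Sterm_le_card_mul hq hm hr hrm small
      (fun p hp ↦ hT p (hnear (mem_filter.1 hp).1))
      (card_primes_le_of_le (by linarith) small fun p hp ↦ (mem_filter.1 hp).2)
  have sum_large :
      ∑ p ∈ large, -Sterm q m p ≤ 8 * (log r / log X) ^ 2 * (2 * logTail r) :=
    have hlt (p) (hp : p ∈ large) : ((p : ℕ) : ℝ) < r := hT p (hnear (hlarge hp))
    sum_neg_Sterm_le_card_mul hq hm hr hrm large hlt
      (card_primes_pow_lt_sq_le hq hm hr hrm hX large hlt
        (fun p hp ↦ not_le.1 (mem_filter.1 (hlarge hp)).2)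
        fun p hp ↦ not_le.1 (mem_filter.1 hp).2)
  rw [← sum_filter_add_sum_filter_not T fun p : Nat.Primes ↦ r ^ 2 ≤ ((p : ℕ) : ℝ) ^ (gp q m p - 1),
    ← sum_filter_add_sum_filter_not near fun p ↦ ((p : ℕ) : ℝ) ≤ X]
  linarith

lemma neg_Smq_le (hq : q.Prime) (hq₃ : 3 ≤ q) (hm : m ≠ 0) (hr : 1 ≤ r) (hrm : r ^ m = q)
    {X : ℝ} (hX : 1 < X) :
    -Smq q m ≤ (26 + 2 * X + 16 * (log r / log X) ^ 2) * logTail r := by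
  rw [Smq, ← tsum_neg]
  refine (summable_Sterm hq₃).neg.tsum_le_of_sum_le fun T ↦ ?_
  have sum_ge := sum_neg_Sterm_le_of_root_le (m := m) hq₃ hr
    (T.filter fun p : Nat.Primes ↦ r ≤ ((p : ℕ) : ℝ)) fun p hp ↦ (mem_filter.1 hp).2
  have sum_lt := sum_neg_Sterm_le_of_lt_root hq hm hr hrm hX
    (T.filter fun p : Nat.Primes ↦ ¬ r ≤ ((p : ℕ) : ℝ)) fun p hp ↦ not_le.1 (mem_filter.1 hp).2
  rw [← sum_filter_add_sum_filter_not T fun p ↦ r ≤ ((p : ℕ) : ℝ)]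
  linarith

end Sums

lemma one_lt_sq_div_log {L : ℝ} (hL : 1 < L) : 1 < L ^ 2 / log L := by
  rw [one_lt_div (log_pos hL)]
  nlinarith [log_le_sub_one_of_pos (zero_lt_one.trans hL)]

lemma sq_div_log_sq_div_log_le {L : ℝ} (hL : 1 < L) :
    (L / log (L ^ 2 / log L)) ^ 2 ≤ L ^ 2 / log L := by
  have hl : 0 < log L := log_pos hL
  have log_add_one_le : log L + 1 ≤ log (L ^ 2 / log L) := by
    rw [log_div (by positivity) hl.ne', log_pow, Nat.cast_ofNat]
    linarith [log_le_sub_one_of_pos hl]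
  calc (L / log (L ^ 2 / log L)) ^ 2 ≤ (L / (log L + 1)) ^ 2 := by
        have : 0 < log (L ^ 2 / log L) := by linarith
        gcongr
    _ = L ^ 2 / (log L + 1) ^ 2 := div_pow ..
    _ ≤ L ^ 2 / log L := by gcongr; nlinarith

theorem statement19_general {q m : ℕ} (hq : q.Prime) (hq₂ : q ≠ 2) (hm : m ≠ 0) :
    -Smq q m ≤ 88 * log q ^ 3 / ((q : ℝ) ^ ((1 : ℝ) / m) * log (log q)) := by
  have hq₃ : 3 ≤ q := by have := hq.two_le; omega
  have hL : 1 < log q := (lt_log_iff_exp_lt (by positivity)).2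
    (exp_one_lt_three.trans_le (by exact_mod_cast hq₃))
  have hr : 1 ≤ (q : ℝ) ^ ((1 : ℝ) / m) := one_le_rpow (by exact_mod_cast hq.one_le) (by positivity)
  have hrm : ((q : ℝ) ^ ((1 : ℝ) / m)) ^ m = q := by
    rw [one_div, rpow_inv_natCast_pow q.cast_nonneg hm]
  set L := log q
  set r := (q : ℝ) ^ ((1 : ℝ) / m)
  have hlogr₀ : 0 ≤ log r := log_nonneg hr
  have hlogr : log r ≤ L := log_le_log (by positivity) ((le_self_pow₀ hr hm).trans_eq hrm)
  set X := L ^ 2 / log L with hXdef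
  have hX : 1 < X := one_lt_sq_div_log hL
  have hlogX : 0 < log X := log_pos hX
  have hratio : (log r / log X) ^ 2 ≤ X :=
    calc (log r / log X) ^ 2 ≤ (L / log X) ^ 2 := by gcongr
      _ ≤ X := sq_div_log_sq_div_log_le hL
  have htail : logTail r ≤ 2 * L / r := by
    rw [logTail]
    gcongr
    linarith
  calc -Smq q m ≤ (26 + 2 * X + 16 * (log r / log X) ^ 2) * logTail r :=
        neg_Smq_le hq hq₃ hm hr hrm hX
    _ ≤ (44 * X) * (2 * L / r) := by
        gcongr
        · exact logTail_nonneg hr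
        · linarith
    _ = 88 * L ^ 3 / (r * log L) := by rw [hXdef]; ring

end

/-- There is an absolute constant `c₂ > 0` such that for every odd prime
`q` and every divisor `m` of `(q−1)/2`, `−S(m,q) ≤ c₂·(log q)³/(q^{1/m}·log log q)`. -/
theorem statement19 :
    ∃ c₂ : ℝ, 0 < c₂ ∧ ∀ q m : ℕ, q.Prime → q ≠ 2 → m ∣ (q - 1) / 2 →
      -Smq q m ≤ c₂ * Real.log q ^ 3 / ((q : ℝ) ^ ((1 : ℝ) / m) * Real.log (Real.log q)) := by
  exact ⟨88, by norm_num, fun _ _ hq hq₂ hmq ↦ statement19_general hq hq₂ <|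
    ne_zero_of_dvd_ne_zero (by have := hq.two_le; omega) hmq⟩
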